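/- Let (X, T) be a dynamical system and λ ∈ (0,1]. If the Zadeh extension system (𝔽^{=λ}(X), T_F|_{𝔽^{=λ}(X)}) with the levelwise metric d_∞ is topologically transitive, then the induced hyperspace system (K(X), T_K) is weakly mixing. -/

import Mathlib

open Metric Set TopologicalSpace Filter Function
open scoped Classical

variable {X Y : Type*}

/-- Extended Hausdorff metric on subsets of `X`: the usual Hausdorff distance between
two nonempty sets (or two empty sets), and `diam X` when exactly one of them is empty. -/
noncomputable def eHd (X : Type*) [MetricSpace X] (A B : Set X) : ℝ :=
  if (A.Nonempty ∧ B.Nonempty) ∨ (A = ∅ ∧ B = ∅) then Metric.hausdorffDist A B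
  else Metric.diam (Set.univ : Set X)

/-- The `α`-cut of a fuzzy set. -/
def cut (A : X → ℝ) (α : ℝ) : Set X := {x | α ≤ A x}

/-- The levelwise metric `d_∞` on fuzzy sets. -/
noncomputable def dinf [MetricSpace X] (A B : X → ℝ) : ℝ :=
  sSup {r : ℝ | ∃ α ∈ Set.Ioc (0:ℝ) 1, r = eHd X (cut A α) (cut B α)}

/-- A fuzzy set: an upper semicontinuous function into `[0,1]`. -/
def IsFuzzy [TopologicalSpace X] (A : X → ℝ) : Prop :=
  (∀ x, A x ∈ Set.Icc (0:ℝ) 1) ∧ UpperSemicontinuous A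

/-- `𝔽₀(X)`: nonempty (not identically zero) u.s.c. fuzzy sets. -/
def F0 (X : Type*) [TopologicalSpace X] : Set (X → ℝ) :=
  {A | IsFuzzy A ∧ ∃ x, A x ≠ 0}

/-- `𝔽^{=λ}(X)`: u.s.c. fuzzy sets with maximum value `λ`. -/
def Feq (X : Type*) [TopologicalSpace X] (lam : ℝ) : Set (X → ℝ) :=
  {A | IsFuzzy A ∧ (∃ x, A x = lam) ∧ ∀ x, A x ≤ lam}

/-- `𝔽^{≥λ}(X)`: u.s.c. fuzzy sets attaining a value `≥ λ`. -/
def Fge (X : Type*) [TopologicalSpace X] (lam : ℝ) : Set (X → ℝ) :=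
  {A | IsFuzzy A ∧ ∃ x, lam ≤ A x}

/-- Zadeh's extension of `T`. -/
noncomputable def zadeh (T : X → X) (A : X → ℝ) : X → ℝ :=
  fun x => sSup (A '' (T ⁻¹' {x}))

/-- The induced map `T_K` on the hyperspace of nonempty closed (= compact) subsets. -/
def hyper [TopologicalSpace X] (T : X → X) (hT : Continuous T)
    (A : NonemptyCompacts X) : NonemptyCompacts X :=
  ⟨⟨T '' A, A.isCompact.image hT⟩, A.nonempty.image T⟩

/-- Topological transitivity. -/
def TopTrans [TopologicalSpace Y] (S : Y → Y) : Prop :=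
  ∀ U V : Set Y, IsOpen U → IsOpen V → U.Nonempty → V.Nonempty →
    ∃ n : ℕ, (S^[n] '' U ∩ V).Nonempty

/-- Weak mixing: `S × S` is transitive. -/
def TopWeakMix [TopologicalSpace Y] (S : Y → Y) : Prop :=
  TopTrans (fun p : Y × Y => (S p.1, S p.2))

/-- Topological transitivity of `S` restricted to `C`, for the topology induced by the
(pseudo)metric `ρ`, phrased via metric balls. -/
def TransOn (ρ : Y → Y → ℝ) (S : Y → Y) (C : Set Y) : Prop :=
  ∀ A ∈ C, ∀ B ∈ C, ∀ ε > 0, ∃ n : ℕ, ∃ E ∈ C, ρ E A < ε ∧ ρ (S^[n] E) B < ε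

/-- Weak mixing of `S` restricted to `C`, phrased via metric balls. -/
def WeakMixOn (ρ : Y → Y → ℝ) (S : Y → Y) (C : Set Y) : Prop :=
  ∀ A₁ ∈ C, ∀ A₂ ∈ C, ∀ B₁ ∈ C, ∀ B₂ ∈ C, ∀ ε > 0, ∃ n : ℕ,
    ∃ E₁ ∈ C, ∃ E₂ ∈ C, ρ E₁ A₁ < ε ∧ ρ E₂ A₂ < ε ∧
      ρ (S^[n] E₁) B₁ < ε ∧ ρ (S^[n] E₂) B₂ < ε

/-!
The cut `A ↦ [A]_λ` intertwines Zadeh's extension with `T_K`, because upper semicontinuity and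
compactness give `[T_F A]_α = T [A]_α`; every nonempty closed set is the `λ`-cut of a multiple of
its indicator, and `d_∞` dominates the Hausdorff distance of the cuts. Hence `T_K` is transitive.

Write `N(U, V)` for the set of times at which the image of `U` meets `V`. Transitivity of `T_K`,
tested on the subsets of `U` against the sets meeting both `V` and `W`, puts a common time in
`N(U, V)` and `N(U, W)`, and this makes `T` weakly mixing. By Furstenberg's intersection lemma any
finitely many `N(Uᵢ, Vᵢ)` then have a common time; choosing one point of `X` for each pair
`(Uᵢ, Vᵢ)` produces finite sets that witness the weak mixing of `T_K` on basic open sets of the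
Vietoris topology.
-/

section HittingTimes

/-- The set `N(U, V)` of times `n` at which the image of `U` under `S^[n]` meets `V`; transitivity
and weak mixing are statements about these sets. -/
def hittingTimes (S : Y → Y) (U V : Set Y) : Set ℕ :=
  {n | (S^[n] '' U ∩ V).Nonempty}

variable {S : Y → Y} {U U' V V' : Set Y}

lemma mem_hittingTimes {n : ℕ} : n ∈ hittingTimes S U V ↔ ∃ x ∈ U, S^[n] x ∈ V :=
  image_inter_nonempty_iff

lemma hittingTimes_mono (hU : U ⊆ U') (hV : V ⊆ V') : hittingTimes S U V ⊆ hittingTimes S U' V' :=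
  fun _ hn ↦ hn.mono (inter_subset_inter (image_mono hU) hV)

lemma hittingTimes_preimage_iterate_subset (m : ℕ) :
    hittingTimes S (S^[m] ⁻¹' U) (S^[m] ⁻¹' V) ⊆ hittingTimes S U V := by
  intro n hn
  obtain ⟨x, hxU, hxV⟩ := mem_hittingTimes.1 hn
  exact mem_hittingTimes.2 ⟨S^[m] x, hxU, by rwa [(Commute.iterate_iterate_self S n m).eq]⟩

lemma mem_hittingTimes_prod {U₁ V₁ U₂ V₂ : Set Y} {n : ℕ} :
    n ∈ hittingTimes (fun p : Y × Y ↦ (S p.1, S p.2)) (U₁ ×ˢ U₂) (V₁ ×ˢ V₂) ↔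
      n ∈ hittingTimes S U₁ V₁ ∩ hittingTimes S U₂ V₂ := by
  change n ∈ hittingTimes (Prod.map S S) _ _ ↔ _
  simp only [hittingTimes, Prod.map_iterate, mem_ofPred_eq, prodMap_image_prod, prod_inter_prod,
    prod_nonempty_iff, mem_inter_iff]

variable [TopologicalSpace Y]

lemma topWeakMix_of_isTopologicalBasis {B : Set (Set Y)} (hB : IsTopologicalBasis B)
    (h : ∀ U₁ ∈ B, ∀ V₁ ∈ B, ∀ U₂ ∈ B, ∀ V₂ ∈ B, U₁.Nonempty → V₁.Nonempty → U₂.Nonempty →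
      V₂.Nonempty → (hittingTimes S U₁ V₁ ∩ hittingTimes S U₂ V₂).Nonempty) :
    TopWeakMix S := by
  rintro 𝒰 𝒱 h𝒰 h𝒱 ⟨p, hp⟩ ⟨q, hq⟩
  obtain ⟨_, ⟨U₁, hU₁, U₂, hU₂, rfl⟩, ⟨hp₁, hp₂⟩, hU⟩ :=
    (hB.prod hB).exists_subset_of_mem_open hp h𝒰
  obtain ⟨_, ⟨V₁, hV₁, V₂, hV₂, rfl⟩, ⟨hq₁, hq₂⟩, hV⟩ :=
    (hB.prod hB).exists_subset_of_mem_open hq h𝒱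
  obtain ⟨n, hn⟩ := h U₁ hU₁ V₁ hV₁ U₂ hU₂ V₂ hV₂ ⟨_, hp₁⟩ ⟨_, hq₁⟩ ⟨_, hp₂⟩ ⟨_, hq₂⟩
  exact ⟨n, hittingTimes_mono hU hV (mem_hittingTimes_prod.2 hn)⟩

lemma TopWeakMix.hittingTimes_inter_nonempty (hS : TopWeakMix S) {U₁ V₁ U₂ V₂ : Set Y}
    (hU₁ : IsOpen U₁) (hV₁ : IsOpen V₁) (hU₂ : IsOpen U₂) (hV₂ : IsOpen V₂)
    (nU₁ : U₁.Nonempty) (nV₁ : V₁.Nonempty) (nU₂ : U₂.Nonempty) (nV₂ : V₂.Nonempty) :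
    (hittingTimes S U₁ V₁ ∩ hittingTimes S U₂ V₂).Nonempty :=
  let ⟨n, hn⟩ := hS _ _ (hU₁.prod hU₂) (hV₁.prod hV₂) (nU₁.prod nU₂) (nV₁.prod nV₂)
  ⟨n, mem_hittingTimes_prod.1 hn⟩

lemma topWeakMix_of_hittingTimes_inter_nonempty (hS : Continuous S) (hSs : Surjective S)
    (h : ∀ U V W : Set Y, IsOpen U → IsOpen V → IsOpen W → U.Nonempty → V.Nonempty →
      W.Nonempty → (hittingTimes S U V ∩ hittingTimes S U W).Nonempty) :
    TopWeakMix S := by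
  refine topWeakMix_of_isTopologicalBasis isTopologicalBasis_opens ?_
  intro U₁ hU₁ V₁ hV₁ U₂ hU₂ V₂ hV₂ nU₁ nV₁ nU₂ nV₂
  -- Move the second pair back along `S^[m]` so that both pairs start in a common open set.
  obtain ⟨m, hm, -⟩ := h U₁ U₂ U₂ hU₁ hU₂ hU₂ nU₁ nU₂ nU₂
  obtain ⟨n, hn₁, hn₂⟩ := h (U₁ ∩ S^[m] ⁻¹' U₂) V₁ (S^[m] ⁻¹' V₂)
    (hU₁.inter (hU₂.preimage (hS.iterate m))) hV₁ (hV₂.preimage (hS.iterate m))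
    (mem_hittingTimes.1 hm) nV₁ (nV₂.preimage (hSs.iterate m))
  exact ⟨n, hittingTimes_mono inter_subset_left Subset.rfl hn₁,
    hittingTimes_preimage_iterate_subset m (hittingTimes_mono inter_subset_right Subset.rfl hn₂)⟩

lemma TopWeakMix.exists_hittingTimes_subset_inter (hS : TopWeakMix S) (hSc : Continuous S)
    {U₁ V₁ U₂ V₂ : Set Y}
    (hU₁ : IsOpen U₁) (hV₁ : IsOpen V₁) (hU₂ : IsOpen U₂) (hV₂ : IsOpen V₂)
    (nU₁ : U₁.Nonempty) (nV₁ : V₁.Nonempty) (nU₂ : U₂.Nonempty) (nV₂ : V₂.Nonempty) :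
    ∃ U V : Set Y, IsOpen U ∧ IsOpen V ∧ U.Nonempty ∧ V.Nonempty ∧
      hittingTimes S U V ⊆ hittingTimes S U₁ V₁ ∩ hittingTimes S U₂ V₂ := by
  obtain ⟨m, hmU, hmV⟩ := hS.hittingTimes_inter_nonempty hU₁ hU₂ hV₁ hV₂ nU₁ nU₂ nV₁ nV₂
  refine ⟨U₁ ∩ S^[m] ⁻¹' U₂, V₁ ∩ S^[m] ⁻¹' V₂, hU₁.inter (hU₂.preimage (hSc.iterate m)),
    hV₁.inter (hV₂.preimage (hSc.iterate m)), mem_hittingTimes.1 hmU, mem_hittingTimes.1 hmV,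
    subset_inter (hittingTimes_mono inter_subset_left inter_subset_left) ?_⟩
  exact (hittingTimes_mono inter_subset_right inter_subset_right).trans
    (hittingTimes_preimage_iterate_subset m)

lemma TopWeakMix.exists_hittingTimes_subset_biInter [Nonempty Y] (hS : TopWeakMix S)
    (hSc : Continuous S) {𝒬 : Set (Set Y × Set Y)} (h𝒬 : 𝒬.Finite)
    (hopen : ∀ p ∈ 𝒬, IsOpen p.1 ∧ IsOpen p.2) (hne : ∀ p ∈ 𝒬, p.1.Nonempty ∧ p.2.Nonempty) :
    ∃ U V : Set Y, IsOpen U ∧ IsOpen V ∧ U.Nonempty ∧ V.Nonempty ∧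
      hittingTimes S U V ⊆ ⋂ p ∈ 𝒬, hittingTimes S p.1 p.2 := by
  induction 𝒬, h𝒬 using Set.Finite.induction_on with
  | empty => exact ⟨univ, univ, isOpen_univ, isOpen_univ, univ_nonempty, univ_nonempty, by simp⟩
  | @insert p 𝒬 _ _ ih =>
    rw [forall_mem_insert] at hopen hne
    obtain ⟨U, V, hU, hV, nU, nV, hUV⟩ := ih hopen.2 hne.2
    obtain ⟨U', V', hU', hV', nU', nV', hUV'⟩ := hS.exists_hittingTimes_subset_inter hSc
      hopen.1.1 hopen.1.2 hU hV hne.1.1 hne.1.2 nU nV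
    refine ⟨U', V', hU', hV', nU', nV', ?_⟩
    rw [biInter_insert]
    exact hUV'.trans (inter_subset_inter_right _ hUV)

lemma TopWeakMix.biInter_hittingTimes_nonempty [Nonempty Y] (hS : TopWeakMix S)
    (hSc : Continuous S) {𝒬 : Set (Set Y × Set Y)} (h𝒬 : 𝒬.Finite)
    (hopen : ∀ p ∈ 𝒬, IsOpen p.1 ∧ IsOpen p.2) (hne : ∀ p ∈ 𝒬, p.1.Nonempty ∧ p.2.Nonempty) :
    (⋂ p ∈ 𝒬, hittingTimes S p.1 p.2).Nonempty := by
  obtain ⟨U, V, hU, hV, nU, nV, hUV⟩ := hS.exists_hittingTimes_subset_biInter hSc h𝒬 hopen hne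
  exact (hS.hittingTimes_inter_nonempty hU hV hU hV nU nV nU nV).mono
    (inter_subset_left.trans hUV)

end HittingTimes

section Hyperspace

/-- The basic open set `⟨U₁, …, Uₙ⟩` of the Vietoris topology: the nonempty compact sets covered by
the members of `u` and meeting each of them. -/
def vietorisBasic [TopologicalSpace X] (u : Set (Set X)) : Set (NonemptyCompacts X) :=
  {K | ↑K ⊆ ⋃₀ u ∧ ∀ U ∈ u, (↑K ∩ U).Nonempty}

variable [TopologicalSpace X] {T : X → X} {hT : Continuous T}

lemma coe_hyper_iterate (K : NonemptyCompacts X) (n : ℕ) :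
    ((hyper T hT)^[n] K : Set X) = T^[n] '' K := by
  have hsemi : Semiconj ((↑) : NonemptyCompacts X → Set X) (hyper T hT) (image T) := fun _ ↦ rfl
  rw [hsemi.iterate_right n K, image_iterate_eq]

lemma hittingTimes_inter_nonempty_of_topTrans_hyper (h : TopTrans (hyper T hT)) {U V W : Set X}
    (hU : IsOpen U) (hV : IsOpen V) (hW : IsOpen W)
    (nU : U.Nonempty) (nV : V.Nonempty) (nW : W.Nonempty) :
    (hittingTimes T U V ∩ hittingTimes T U W).Nonempty := by
  obtain ⟨u, hu⟩ := nU
  obtain ⟨v, hv⟩ := nV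
  obtain ⟨w, hw⟩ := nW
  obtain ⟨n, _, ⟨K, hKU, rfl⟩, hKV, hKW⟩ := h
    {K | ↑K ⊆ U} ({K | (↑K ∩ V).Nonempty} ∩ {K | (↑K ∩ W).Nonempty})
    (NonemptyCompacts.isOpen_subsets_of_isOpen hU)
    ((NonemptyCompacts.isOpen_inter_nonempty_of_isOpen hV).inter
      (NonemptyCompacts.isOpen_inter_nonempty_of_isOpen hW))
    ⟨{u}, by simpa using hu⟩
    ⟨{v} ⊔ {w}, ⟨v, by simp, hv⟩, ⟨w, by simp, hw⟩⟩
  rw [mem_ofPred_eq, coe_hyper_iterate] at hKV hKW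
  exact ⟨n, hittingTimes_mono hKU Subset.rfl hKV, hittingTimes_mono hKU Subset.rfl hKW⟩

lemma topWeakMix_of_topTrans_hyper (hTs : Surjective T) (h : TopTrans (hyper T hT)) :
    TopWeakMix T :=
  topWeakMix_of_hittingTimes_inter_nonempty hT hTs fun _ _ _ ↦
    hittingTimes_inter_nonempty_of_topTrans_hyper h

lemma mem_hittingTimes_hyper_vietorisBasic {u v : Set (Set X)} (hu : u.Finite) (hv : v.Finite)
    (nu : u.Nonempty) (nv : v.Nonempty) {n : ℕ}
    (hn : ∀ p ∈ u ×ˢ v, n ∈ hittingTimes T p.1 p.2) :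
    n ∈ hittingTimes (hyper T hT) (vietorisBasic u) (vietorisBasic v) := by
  obtain ⟨U₀, hU₀⟩ := nu
  obtain ⟨V₀, hV₀⟩ := nv
  have : Nonempty X := (hn (U₀, V₀) ⟨hU₀, hV₀⟩).to_type
  choose! x hxU hxV using fun p hp ↦ mem_hittingTimes.1 (hn p hp)
  let K : NonemptyCompacts X :=
    ⟨⟨x '' (u ×ˢ v), ((hu.prod hv).image x).isCompact⟩, ⟨x (U₀, V₀), (U₀, V₀), ⟨hU₀, hV₀⟩, rfl⟩⟩
  have hxK : ∀ p ∈ u ×ˢ v, x p ∈ (K : Set X) := fun p hp ↦ mem_image_of_mem x hp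
  refine mem_hittingTimes.2 ⟨K, ⟨?_, fun U hU ↦ ?_⟩, ?_⟩
  · rintro _ ⟨p, hp, rfl⟩
    exact ⟨p.1, hp.1, hxU p hp⟩
  · exact ⟨_, hxK (U, V₀) ⟨hU, hV₀⟩, hxU (U, V₀) ⟨hU, hV₀⟩⟩
  · rw [vietorisBasic, mem_ofPred_eq, coe_hyper_iterate]
    refine ⟨?_, fun V hV ↦ ?_⟩
    · rintro _ ⟨_, ⟨p, hp, rfl⟩, rfl⟩
      exact ⟨p.2, hp.2, hxV p hp⟩
    · exact ⟨_, mem_image_of_mem _ (hxK (U₀, V) ⟨hU₀, hV⟩), hxV (U₀, V) ⟨hU₀, hV⟩⟩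

lemma forall_nonempty_of_vietorisBasic_nonempty {u : Set (Set X)}
    (hu : (vietorisBasic u).Nonempty) : ∀ U ∈ u, U.Nonempty :=
  let ⟨_, hK⟩ := hu
  fun U hU ↦ (hK.2 U hU).right

lemma TopWeakMix.hyper (h : TopWeakMix T) (hT : Continuous T) : TopWeakMix (hyper T hT) := by
  refine topWeakMix_of_isTopologicalBasis NonemptyCompacts.isTopologicalBasis ?_
  rintro _ ⟨u₁, ⟨fu₁, nu₁, ou₁⟩, rfl⟩ _ ⟨v₁, ⟨fv₁, nv₁, ov₁⟩, rfl⟩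
    _ ⟨u₂, ⟨fu₂, nu₂, ou₂⟩, rfl⟩ _ ⟨v₂, ⟨fv₂, nv₂, ov₂⟩, rfl⟩ neU₁ neV₁ neU₂ neV₂
  have : Nonempty X := neU₁.some.nonempty.to_type
  have hu₁ := forall_nonempty_of_vietorisBasic_nonempty neU₁
  have hv₁ := forall_nonempty_of_vietorisBasic_nonempty neV₁
  have hu₂ := forall_nonempty_of_vietorisBasic_nonempty neU₂
  have hv₂ := forall_nonempty_of_vietorisBasic_nonempty neV₂
  obtain ⟨n, hn⟩ := h.biInter_hittingTimes_nonempty hT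
    (𝒬 := u₁ ×ˢ v₁ ∪ u₂ ×ˢ v₂) ((fu₁.prod fv₁).union (fu₂.prod fv₂))
    (by rintro p (hp | hp)
        exacts [⟨ou₁ _ hp.1, ov₁ _ hp.2⟩, ⟨ou₂ _ hp.1, ov₂ _ hp.2⟩])
    (by rintro p (hp | hp)
        exacts [⟨hu₁ _ hp.1, hv₁ _ hp.2⟩, ⟨hu₂ _ hp.1, hv₂ _ hp.2⟩])
  rw [mem_iInter₂] at hn
  exact ⟨n, mem_hittingTimes_hyper_vietorisBasic fu₁ fv₁ nu₁ nv₁ fun p hp ↦ hn p (.inl hp),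
    mem_hittingTimes_hyper_vietorisBasic fu₂ fv₂ nu₂ nv₂ fun p hp ↦ hn p (.inr hp)⟩

end Hyperspace

section Zadeh

lemma cut_indicator_const {lam α : ℝ} (hα : 0 < α) (hαlam : α ≤ lam) (K : Set X) :
    cut (K.indicator fun _ ↦ lam) α = K := by
  ext x
  by_cases hx : x ∈ K <;> simp [cut, hx, hα, hαlam]

lemma indicator_const_mem_Feq [TopologicalSpace X] {lam : ℝ} (hlam : lam ∈ Icc (0 : ℝ) 1)
    {K : Set X} (hK : IsClosed K) (hne : K.Nonempty) :
    K.indicator (fun _ ↦ lam) ∈ Feq X lam := by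
  have hle (x : X) : K.indicator (fun _ ↦ lam) x ≤ lam := indicator_le_self' (fun _ _ ↦ hlam.1) x
  refine ⟨⟨fun x ↦ ⟨indicator_nonneg (fun _ _ ↦ hlam.1) x, (hle x).trans hlam.2⟩,
    hK.upperSemicontinuous_indicator hlam.1⟩, ?_, hle⟩
  exact ⟨hne.some, indicator_of_mem hne.some_mem _⟩

variable [TopologicalSpace X] [CompactSpace X] {T : X → X} {A : X → ℝ} {α : ℝ}

lemma cut_zadeh [T1Space X] (hT : Continuous T) (hA : UpperSemicontinuous A) (hα : 0 < α) :
    cut (zadeh T A) α = T '' cut A α := by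
  have hbdd (x : X) : BddAbove (A '' (T ⁻¹' {x})) :=
    ((hA.upperSemicontinuousOn _).bddAbove_of_isCompact isCompact_univ).mono
      (image_mono (subset_univ _))
  refine Subset.antisymm (fun x (hx : α ≤ sSup (A '' (T ⁻¹' {x}))) ↦ ?_) ?_
  · have hfiber : (T ⁻¹' {x}).Nonempty := by
      by_contra! hempty
      rw [hempty, image_empty, Real.sSup_empty] at hx
      exact hx.not_gt hα
    obtain ⟨y, hy, hmax⟩ := (hA.upperSemicontinuousOn _).exists_isMaxOn hfiber
      (isClosed_singleton.preimage hT).isCompact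
    exact ⟨y, hx.trans (csSup_le (hfiber.image A) (forall_mem_image.2 hmax)), hy⟩
  · rintro _ ⟨y, hy, rfl⟩
    exact le_csSup_of_le (hbdd (T y)) (mem_image_of_mem A rfl) hy

lemma isFuzzy_zadeh [T2Space X] (hT : Continuous T) (hA : IsFuzzy A) : IsFuzzy (zadeh T A) := by
  have hnonneg (x : X) : 0 ≤ zadeh T A x :=
    Real.sSup_nonneg (forall_mem_image.2 fun y _ ↦ (hA.1 y).1)
  refine ⟨fun x ↦ ⟨hnonneg x, Real.sSup_le (forall_mem_image.2 fun y _ ↦ (hA.1 y).2) zero_le_one⟩,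
    upperSemicontinuous_iff_isClosed_preimage.2 fun α ↦ ?_⟩
  change IsClosed (cut (zadeh T A) α)
  rcases le_or_gt α 0 with hα | hα
  · rw [show cut (zadeh T A) α = univ from eq_univ_of_forall fun x ↦ hα.trans (hnonneg x)]
    exact isClosed_univ
  · rw [cut_zadeh hT hA.2 hα]
    exact ((hA.2.isClosed_preimage α).isCompact.image hT).isClosed

lemma cut_zadeh_iterate [T2Space X] (hT : Continuous T) (hA : IsFuzzy A) (hα : 0 < α) (n : ℕ) :
    cut ((zadeh T)^[n] A) α = T^[n] '' cut A α := by
  induction n generalizing A with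
  | zero => simp
  | succ n ih =>
    rw [iterate_succ_apply, ih (isFuzzy_zadeh hT hA), cut_zadeh hT hA.2 hα, iterate_succ,
      image_comp]

end Zadeh

section LevelwiseMetric

lemma eHd_le_diam_univ [MetricSpace X] [BoundedSpace X] (K L : Set X) :
    eHd X K L ≤ diam (univ : Set X) := by
  unfold eHd
  split_ifs with h
  · rcases h with ⟨hK, hL⟩ | ⟨rfl, rfl⟩
    · exact (hausdorffDist_le_diam hK (.all K) hL (.all L)).trans
        (diam_mono (subset_univ _) (.all univ))
    · exact hausdorffDist_self_zero.trans_le diam_nonneg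
  · exact le_rfl

lemma hausdorffDist_cut_le_dinf [MetricSpace X] [BoundedSpace X] {A B : X → ℝ} {α : ℝ}
    (hα : α ∈ Ioc (0 : ℝ) 1) (hA : (cut A α).Nonempty) (hB : (cut B α).Nonempty) :
    hausdorffDist (cut A α) (cut B α) ≤ dinf A B := by
  rw [← show eHd X (cut A α) (cut B α) = _ from if_pos (.inl ⟨hA, hB⟩)]
  refine le_csSup ⟨diam (univ : Set X), ?_⟩ ⟨α, hα, rfl⟩
  rintro _ ⟨β, -, rfl⟩
  exact eHd_le_diam_univ _ _

lemma topTrans_hyper_of_transOn_zadeh [MetricSpace X] [CompactSpace X] {T : X → X}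
    (hT : Continuous T) {lam : ℝ} (hlam : lam ∈ Ioc (0 : ℝ) 1)
    (htrans : TransOn dinf (zadeh T) (Feq X lam)) : TopTrans (hyper T hT) := by
  rintro 𝒰 𝒱 h𝒰 h𝒱 ⟨K, hK⟩ ⟨L, hL⟩
  obtain ⟨δ, hδ, hδ𝒰⟩ := isOpen_iff.1 h𝒰 K hK
  obtain ⟨η, hη, hη𝒱⟩ := isOpen_iff.1 h𝒱 L hL
  have hmem (M : NonemptyCompacts X) : (M : Set X).indicator (fun _ ↦ lam) ∈ Feq X lam :=
    indicator_const_mem_Feq (Ioc_subset_Icc_self hlam) M.isCompact.isClosed M.nonempty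
  have hcut (M : NonemptyCompacts X) : cut ((M : Set X).indicator fun _ ↦ lam) lam = M :=
    cut_indicator_const hlam.1 le_rfl (M : Set X)
  obtain ⟨n, E, ⟨hE, ⟨x, hx⟩, -⟩, hEK, hEL⟩ :=
    htrans _ (hmem K) _ (hmem L) (min δ η) (lt_min hδ hη)
  let M : NonemptyCompacts X :=
    ⟨⟨cut E lam, (hE.2.isClosed_preimage lam).isCompact⟩, ⟨x, hx.ge⟩⟩
  have hMn : ((hyper T hT)^[n] M : Set X) = cut ((zadeh T)^[n] E) lam := by
    rw [coe_hyper_iterate, cut_zadeh_iterate hT hE hlam.1]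
    rfl
  have hMK : dist M K ≤ dinf E ((K : Set X).indicator fun _ ↦ lam) := by
    have := hausdorffDist_cut_le_dinf hlam M.nonempty ((hcut K).symm ▸ K.nonempty)
    rwa [hcut] at this
  have hML : dist ((hyper T hT)^[n] M) L ≤
      dinf ((zadeh T)^[n] E) ((L : Set X).indicator fun _ ↦ lam) := by
    have := hausdorffDist_cut_le_dinf hlam (hMn ▸ NonemptyCompacts.nonempty _)
      ((hcut L).symm ▸ L.nonempty)
    rwa [hcut, ← hMn] at this
  exact ⟨n, _, mem_image_of_mem _ (hδ𝒰 (hMK.trans_lt (hEK.trans_le (min_le_left _ _)))),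
    hη𝒱 (hML.trans_lt (hEL.trans_le (min_le_right _ _)))⟩

end LevelwiseMetric

/-- If the Zadeh extension restricted to `𝔽^{=λ}(X)` is topologically transitive, then
the induced hyperspace system `(K(X), T_K)` is weakly mixing. -/
theorem hyper_weakMixing_of_zadeh_transitive {X : Type*} [MetricSpace X] [CompactSpace X] [Nontrivial X]
    (T : X → X) (hT : Continuous T) (hTs : Function.Surjective T)
    (lam : ℝ) (hlam : lam ∈ Set.Ioc (0:ℝ) 1)
    (htrans : TransOn dinf (zadeh T) (Feq X lam)) :
    TopWeakMix (hyper T hT) := by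
  have hhyper : TopTrans (hyper T hT) := topTrans_hyper_of_transOn_zadeh hT hlam htrans
  have hmix : TopWeakMix T := topWeakMix_of_topTrans_hyper hTs hhyper
  exact hmix.hyper hT
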